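/- Let x > 0 and let s ∈ ℂ with Re(s) > 1/2. Then ∑_{n=1}^∞ (n² + x²)^{−s} = (√π·x^{1−2s}/(2Γ(s)))·Γ(s − 1/2) − x^{−2s}/2 + (2π^s·x^{1/2−s}/Γ(s))·∑_{n=1}^∞ n^{s−1/2}·K_{s−1/2}(2πnx). -/

import Mathlib

/-!
Multiplying the left-hand side by `Γ(s)` and writing `Γ(s) p ^ (-s)` as the Mellin integral of
`exp (-p t)` turns it into `∫ t ^ (s-1) e^{-x² t} ∑_{n ≥ 1} e^{-n² t} dt` over `t > 0`. Poisson
summation (Jacobi's identity for theta, `theta_split`) replaces the inner sum by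
`-1/2 + √(π/t) (1/2 + ∑_{n ≥ 1} e^{-π² n² / t})`. The first two terms integrate to the Gamma
factors; the `n`-th remaining term gives `√π ∫ t ^ (s-3/2) e^{-x² t - (π n)² / t} dt`. Sum and
integral may be exchanged since `e^{-c²/t} ≤ t / c²` makes the integrals `O(1/n²)`.

It remains to recognise `∫ u ^ (ν-1) e^{-x² u - c² / u} du` as a multiple of `K_ν(2 c x)` for
`K_ν` given by its integral over `(1, ∞)`; this is `bessel_kernel`. After the substitution
`w = t² - 1`, the factor `e^{-2 c x √(1+w)} / √(1+w)` is expanded by the subordination formula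
`∫ u ^ (-3/2) e^{-a² u - b² / u} du = (√π / b) e^{-2ab}` (`subordination`), and Fubini leaves a
Gamma integral in `w`.
-/

/-- The modified Bessel function of the second kind `K_ν(z)` for real `z > 0` and
complex order `ν` with `Re ν > -1/2`, defined by its standard integral representation. -/
noncomputable def besselK (ν : ℂ) (z : ℝ) : ℂ :=
  (Real.sqrt Real.pi : ℂ) * ((z / 2 : ℝ) : ℂ) ^ ν / Complex.Gamma (ν + 1 / 2) *
    ∫ t in Set.Ioi (1 : ℝ), Complex.exp (-(z * t)) * ((t ^ 2 - 1 : ℝ) : ℂ) ^ (ν - 1 / 2)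

open MeasureTheory Set Filter Topology

/-! ### The subordination formula -/

theorem gauss_primitive_tendsto :
    Tendsto (fun w : ℝ => ∫ y in (0 : ℝ)..w, Real.exp (-y ^ 2)) atTop (𝓝 (√Real.pi / 2)) := by
  have h := intervalIntegral_tendsto_integral_Ioi (μ := volume) (0 : ℝ)
    (f := fun y : ℝ => Real.exp (-1 * y ^ 2))
    (integrable_exp_neg_mul_sq one_pos).integrableOn tendsto_id
  rw [integral_gaussian_Ioi] at h
  simpa using h

theorem gauss_primitive_neg (w : ℝ) :
    (∫ y in (0 : ℝ)..(-w), Real.exp (-y ^ 2)) = -∫ y in (0 : ℝ)..w, Real.exp (-y ^ 2) := by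
  have h := intervalIntegral.integral_comp_neg (a := 0) (b := w)
    (fun y : ℝ => Real.exp (-y ^ 2))
  simp only [neg_sq, neg_zero] at h
  rw [h, intervalIntegral.integral_symm]

theorem gauss_primitive_hasDerivAt (w : ℝ) :
    HasDerivAt (fun w : ℝ => ∫ y in (0 : ℝ)..w, Real.exp (-y ^ 2)) (Real.exp (-w ^ 2)) w := by
  have hc : Continuous fun y : ℝ => Real.exp (-y ^ 2) := by fun_prop
  exact intervalIntegral.integral_hasDerivAt_right (hc.intervalIntegrable _ _)
    (hc.stronglyMeasurableAtFilter _ _) hc.continuousAt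

/-- The subordination formula, with `u ^ (-3/2)` written as `(u √u)⁻¹`. With `G` a primitive of
`e^{-y²}`, the integrand times `b e^{2ab}` is the derivative of
`G(a√u - b/√u) - e^{4ab} G(a√u + b/√u)`, whose limits at `0` and `∞` differ by `√π`. -/
theorem subordination {a b : ℝ} (ha : 0 < a) (hb : 0 < b) :
    ∫ u in Ioi (0 : ℝ), (u * √u)⁻¹ * Real.exp (-(a ^ 2 * u) - b ^ 2 / u) =
      √Real.pi / b * Real.exp (-(2 * a * b)) := by
  set G : ℝ → ℝ := fun w => ∫ y in (0 : ℝ)..w, Real.exp (-y ^ 2) with hG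
  have hGtop : Tendsto G atTop (𝓝 (√Real.pi / 2)) := gauss_primitive_tendsto
  have hGneg : ∀ w, G (-w) = -G w := gauss_primitive_neg
  have hGder : ∀ w, HasDerivAt G (Real.exp (-w ^ 2)) w := gauss_primitive_hasDerivAt
  set f : ℝ → ℝ := fun u =>
    -G (b / √u - a * √u) - Real.exp (4 * a * b) * G (a * √u + b / √u) with hf
  have hsq : Tendsto (fun u : ℝ => √u) atTop atTop := Real.tendsto_sqrt_atTop
  have hsq0 : Tendsto (fun u : ℝ => √u) (𝓝[>] 0) (𝓝[>] 0) := by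
    refine tendsto_nhdsWithin_iff.2 ⟨?_, ?_⟩
    · have := (Real.continuous_sqrt.tendsto 0).mono_left (nhdsWithin_le_nhds (s := Ioi 0))
      simpa using this
    · filter_upwards [self_mem_nhdsWithin] with u hu using Real.sqrt_pos.2 hu
  have hinv : Tendsto (fun u : ℝ => b / √u) atTop (𝓝 0) := hsq.const_div_atTop b
  have hinv0 : Tendsto (fun u : ℝ => b / √u) (𝓝[>] 0) atTop := by
    simpa [div_eq_mul_inv] using (tendsto_inv_nhdsGT_zero.comp hsq0).const_mul_atTop hb
  have hlin : Tendsto (fun u : ℝ => a * √u) atTop atTop := hsq.const_mul_atTop ha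
  have hlin0 : Tendsto (fun u : ℝ => a * √u) (𝓝[>] 0) (𝓝 0) := by
    simpa using (hsq0.mono_right nhdsWithin_le_nhds).const_mul a
  have htop : Tendsto f atTop (𝓝 (√Real.pi / 2 - Real.exp (4 * a * b) * (√Real.pi / 2))) := by
    refine Tendsto.sub ?_ ((hGtop.comp (hlin.atTop_add hinv)).const_mul _)
    have : Tendsto (fun u : ℝ => a * √u - b / √u) atTop atTop := by
      simpa [sub_eq_add_neg] using hlin.atTop_add hinv.neg
    refine (hGtop.comp this).congr fun u => ?_
    rw [← hGneg]; simp
  have hzero : Tendsto f (𝓝[>] 0)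
      (𝓝 (-(√Real.pi / 2) - Real.exp (4 * a * b) * (√Real.pi / 2))) := by
    refine Tendsto.sub (Tendsto.neg ?_) (Tendsto.const_mul _ ?_)
    · refine hGtop.comp ?_
      simpa [sub_eq_add_neg] using hinv0.atTop_add hlin0.neg
    · exact hGtop.comp (hlin0.add_atTop hinv0)
  have hder : ∀ u ∈ Ioi (0 : ℝ), HasDerivAt f
      (b * Real.exp (2 * a * b) * ((u * √u)⁻¹ * Real.exp (-(a ^ 2 * u) - b ^ 2 / u))) u := by
    intro u hu
    have hu : 0 < u := hu
    have hr : 0 < √u := Real.sqrt_pos.2 hu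
    have hs := Real.hasDerivAt_sqrt hu.ne'
    have h1 := ((hasDerivAt_const u b).div hs hr.ne').sub (hs.const_mul a)
    have h2 := (hs.const_mul a).add ((hasDerivAt_const u b).div hs hr.ne')
    have h := ((hGder _).comp u h1).neg.sub (((hGder _).comp u h2).const_mul (Real.exp (4 * a * b)))
    refine h.congr_deriv ?_
    have hu2 : u = √u ^ 2 := (Real.sq_sqrt hu.le).symm
    have e1 : Real.exp (-(b / √u - a * √u) ^ 2) =
        Real.exp (2 * a * b) * Real.exp (-(a ^ 2 * u) - b ^ 2 / u) := by
      rw [← Real.exp_add]; congr 1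
      conv_rhs => rw [hu2]
      field_simp; ring
    have e2 : Real.exp (4 * a * b) * Real.exp (-(a * √u + b / √u) ^ 2) =
        Real.exp (2 * a * b) * Real.exp (-(a ^ 2 * u) - b ^ 2 / u) := by
      rw [← Real.exp_add, ← Real.exp_add]; congr 1
      conv_rhs => rw [hu2]
      field_simp; ring
    simp only [Pi.sub_apply, Pi.add_apply, Pi.div_apply]
    rw [← mul_assoc (Real.exp (4 * a * b)), e1, e2]
    generalize Real.exp (-(a ^ 2 * u) - b ^ 2 / u) = E
    generalize √u = r at *
    subst hu2
    field_simp
    ring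
  -- At `u = 0` the junk value `b / √0 = 0` makes `f` discontinuous, so its value there is replaced
  -- by the right-hand limit.
  have key := integral_Ioi_of_hasDerivAt_of_nonneg (a := 0)
    (g := Function.update f 0 (-(√Real.pi / 2) - Real.exp (4 * a * b) * (√Real.pi / 2)))
    (g' := fun u => b * Real.exp (2 * a * b) *
      ((u * √u)⁻¹ * Real.exp (-(a ^ 2 * u) - b ^ 2 / u)))
    (l := √Real.pi / 2 - Real.exp (4 * a * b) * (√Real.pi / 2)) ?_ ?_ ?_ ?_
  · rw [integral_const_mul, Function.update_self] at key
    rw [Real.exp_neg]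
    have := Real.exp_pos (2 * a * b)
    generalize ∫ u in Ioi (0 : ℝ), (u * √u)⁻¹ * Real.exp (-(a ^ 2 * u) - b ^ 2 / u) = J at *
    generalize Real.exp (2 * a * b) = E at *
    field_simp
    linarith
  · rw [continuousWithinAt_update_same]
    simpa using hzero
  · intro u hu
    refine (hder u hu).congr_of_eventuallyEq ?_
    filter_upwards [Ioi_mem_nhds hu] with v hv
    exact Function.update_of_ne (ne_of_gt hv) _ _
  · intro u hu
    have hu : 0 < u := hu
    positivity
  · refine htop.congr' ?_
    filter_upwards [Ioi_mem_atTop 0] with v hv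
    exact (Function.update_of_ne (ne_of_gt hv) _ _).symm

/-! ### The two integral representations of the Bessel function -/

theorem integrableOn_rpow_exp {x q : ℝ} (hx : 0 < x) (hq : -1 < q) :
    IntegrableOn (fun u : ℝ => u ^ q * Real.exp (-(x ^ 2 * u))) (Ioi 0) := by
  have := integrableOn_rpow_mul_exp_neg_mul_rpow hq one_pos (pow_pos hx 2)
  simpa using this

/-- The substitution `w = t² - 1` in the integral defining the Bessel function. -/
theorem bessel_cov (z : ℝ) (s : ℂ) :
    ∫ t in Ioi (1 : ℝ), Complex.exp (-(z * t)) * ((t ^ 2 - 1 : ℝ) : ℂ) ^ (s - 1) =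
      ∫ w in Ioi (0 : ℝ), (w : ℂ) ^ (s - 1) *
        ((Real.exp (-(z * √(1 + w))) / (2 * √(1 + w)) : ℝ) : ℂ) := by
  have himg : (fun t : ℝ => t ^ 2 - 1) '' Ioi 1 = Ioi 0 := by
    ext w
    simp only [mem_image, mem_Ioi]
    constructor
    · rintro ⟨t, ht, rfl⟩; nlinarith
    · intro hw
      refine ⟨√(1 + w), ?_, ?_⟩
      · rw [Real.lt_sqrt] <;> linarith
      · rw [Real.sq_sqrt] <;> linarith
  rw [← himg, integral_image_eq_integral_abs_deriv_smul measurableSet_Ioi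
    (f' := fun t => 2 * t) (fun t _ => ?_) (fun t ht v hv h => ?_)]
  · refine setIntegral_congr_fun measurableSet_Ioi fun t ht => ?_
    have ht : 1 < t := ht
    have h1 : √(1 + (t ^ 2 - 1)) = t := by
      rw [add_sub_cancel, Real.sqrt_sq (by linarith)]
    simp only [h1]
    have h0 : (t : ℂ) ≠ 0 := by exact_mod_cast (by linarith : t ≠ 0)
    rw [abs_of_pos (by linarith), Complex.real_smul]
    push_cast
    field_simp
  · have := ((hasDerivAt_pow 2 t).sub_const 1).hasDerivWithinAt (s := Ioi 1)
    simpa using this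
  · have ht : 1 < t := ht
    have hv : 1 < v := hv
    have h : t ^ 2 - 1 = v ^ 2 - 1 := h
    nlinarith

theorem rpow_mul_cpow_aux {u : ℝ} (hu : 0 < u) (s : ℂ) :
    (((u * √u)⁻¹ : ℝ) : ℂ) * (u : ℂ) ^ s = (u : ℂ) ^ (s - 3 / 2) := by
  have h0 : (u : ℂ) ≠ 0 := by exact_mod_cast hu.ne'
  have h1 : (((u * √u)⁻¹ : ℝ) : ℂ) = (u : ℂ) ^ (-(3 / 2) : ℂ) := by
    have : (u * √u)⁻¹ = u ^ (-(3 / 2) : ℝ) := by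
      rw [Real.rpow_neg hu.le, Real.sqrt_eq_rpow, ← Real.rpow_one_add' hu.le (by norm_num)]
      norm_num
    rw [this, Complex.ofReal_cpow hu.le]
    push_cast
    rfl
  rw [h1, ← Complex.cpow_add _ _ h0]
  congr 1
  ring

theorem integrableOn_cpow_exp {x c : ℝ} (hx : 0 < x) {s : ℂ} (hs : 1 / 2 < s.re) :
    IntegrableOn (fun u : ℝ => (u : ℂ) ^ (s - 3 / 2) *
      ((Real.exp (-(x ^ 2 * u) - c ^ 2 / u) : ℝ) : ℂ)) (Ioi 0) := by
  refine Integrable.mono' (integrableOn_rpow_exp hx (q := s.re - 3 / 2) (by linarith)) ?_ ?_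
  · refine Measurable.aestronglyMeasurable ?_
    fun_prop
  · refine (ae_restrict_iff' measurableSet_Ioi).2 (ae_of_all _ fun u hu => ?_)
    have hu : 0 < u := hu
    rw [norm_mul, Complex.norm_cpow_eq_rpow_re_of_pos hu, Complex.norm_real,
      Real.norm_of_nonneg (Real.exp_pos _).le]
    have : (s - 3 / 2).re = s.re - 3 / 2 := by norm_num
    rw [this]
    gcongr
    have : 0 ≤ c ^ 2 / u := by positivity
    linarith

/-- The integral over `(1, ∞)` defining `K_{s-1/2}(2 c x)`, expressed through
`∫ u ^ (s-3/2) e^{-x² u - c² / u} du`. -/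
theorem bessel_kernel {x c : ℝ} (hx : 0 < x) (hc : 0 < c) {s : ℂ} (hs : 1 / 2 < s.re) :
    ∫ t in Ioi (1 : ℝ), Complex.exp (-(((2 * c * x : ℝ) : ℂ) * t)) *
        ((t ^ 2 - 1 : ℝ) : ℂ) ^ (s - 1) =
      (c : ℂ) / (2 * √Real.pi) * ((c : ℂ) ^ (-(2 * s)) * Complex.Gamma s) *
        ∫ u in Ioi (0 : ℝ), (u : ℂ) ^ (s - 3 / 2) *
          ((Real.exp (-(x ^ 2 * u) - c ^ 2 / u) : ℝ) : ℂ) := by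
  have hpi : 0 < √Real.pi := Real.sqrt_pos.2 Real.pi_pos
  have hs0 : 0 < s.re := by linarith
  -- `∫ k w u du` is the subordination integral with `a = x`, `b = c √(1 + w)`, while `∫ k w u dw` is
  -- a Gamma integral.
  set k : ℝ → ℝ → ℂ := fun w u => (w : ℂ) ^ (s - 1) *
    (((u * √u)⁻¹ * Real.exp (-(x ^ 2 * u) - c ^ 2 * (1 + w) / u) : ℝ) : ℂ) with hk
  have hsplit : ∀ {u : ℝ} (w : ℝ), 0 < u → k w u =
      (((u * √u)⁻¹ * Real.exp (-(x ^ 2 * u) - c ^ 2 / u) : ℝ) : ℂ) *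
        ((w : ℂ) ^ (s - 1) * Complex.exp (-(((c ^ 2 / u : ℝ) : ℂ) * w))) := by
    intro u w hu
    have : Real.exp (-(x ^ 2 * u) - c ^ 2 * (1 + w) / u) =
        Real.exp (-(x ^ 2 * u) - c ^ 2 / u) * Real.exp (-(c ^ 2 / u * w)) := by
      rw [← Real.exp_add]; congr 1; field_simp; ring
    simp only [hk, this]
    push_cast
    ring
  have hinner : ∀ u ∈ Ioi (0 : ℝ), ∫ w in Ioi (0 : ℝ), k w u =
      ((c : ℂ) ^ (-(2 * s)) * Complex.Gamma s) * ((u : ℂ) ^ (s - 3 / 2) *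
          ((Real.exp (-(x ^ 2 * u) - c ^ 2 / u) : ℝ) : ℂ)) := by
    intro u hu
    have hu : 0 < u := hu
    simp_rw [fun w => hsplit w hu]
    rw [integral_const_mul, Complex.integral_cpow_mul_exp_neg_mul_Ioi hs0 (by positivity),
      ← rpow_mul_cpow_aux hu]
    have : (1 / ((c ^ 2 / u : ℝ) : ℂ)) ^ s = (c : ℂ) ^ (-(2 * s)) * (u : ℂ) ^ s := by
      have h1 : (1 / ((c ^ 2 / u : ℝ) : ℂ)) = ((((c⁻¹) ^ 2 : ℝ) : ℂ)) * (u : ℂ) := by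
        push_cast; field_simp
      rw [h1, Complex.mul_cpow_ofReal_nonneg (by positivity) hu.le]
      congr 1
      have hc0 : (c : ℂ) ≠ 0 := by exact_mod_cast hc.ne'
      rw [Complex.cpow_def_of_ne_zero (by exact_mod_cast (by positivity : (c⁻¹) ^ 2 ≠ 0)),
        Complex.cpow_def_of_ne_zero hc0, ← Complex.ofReal_log (by positivity),
        ← Complex.ofReal_log hc.le, Real.log_pow, Real.log_inv]
      congr 1
      push_cast
      ring
    rw [this]
    push_cast
    ring
  have hnorm : ∀ u ∈ Ioi (0 : ℝ), ∫ w in Ioi (0 : ℝ), ‖k w u‖ =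
      ((c ^ 2) ^ (-s.re) * Real.Gamma s.re) * ‖(u : ℂ) ^ (s - 3 / 2) *
          ((Real.exp (-(x ^ 2 * u) - c ^ 2 / u) : ℝ) : ℂ)‖ := by
    intro u hu
    have hu : 0 < u := hu
    have h1 : ∀ w ∈ Ioi (0 : ℝ), ‖k w u‖ =
        ((u * √u)⁻¹ * Real.exp (-(x ^ 2 * u) - c ^ 2 / u)) *
          (w ^ (s.re - 1) * Real.exp (-((c ^ 2 / u) * w))) := by
      intro w hw
      have hw : 0 < w := hw
      rw [hsplit w hu, norm_mul, norm_mul, Complex.norm_cpow_eq_rpow_re_of_pos hw,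
        Complex.norm_real, Real.norm_of_nonneg (by positivity), ← Complex.ofReal_mul,
        ← Complex.ofReal_neg, ← Complex.ofReal_exp, Complex.norm_real,
        Real.norm_of_nonneg (Real.exp_pos _).le]
      simp
    rw [setIntegral_congr_fun measurableSet_Ioi h1, integral_const_mul,
      Real.integral_rpow_mul_exp_neg_mul_Ioi hs0 (by positivity), ← rpow_mul_cpow_aux hu,
      norm_mul, norm_mul, Complex.norm_cpow_eq_rpow_re_of_pos hu,
      Complex.norm_real, Real.norm_of_nonneg (by positivity), Complex.norm_real,
      Real.norm_of_nonneg (Real.exp_pos _).le, one_div_div, Real.div_rpow hu.le (by positivity),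
      Real.rpow_neg (by positivity)]
    ring
  have hint : Integrable (Function.uncurry k)
      ((volume.restrict (Ioi 0)).prod (volume.restrict (Ioi 0))) := by
    rw [integrable_prod_iff']
    · constructor
      · refine (ae_restrict_iff' measurableSet_Ioi).2 (ae_of_all _ fun u hu => ?_)
        have hu : 0 < u := hu
        -- A non-integrable norm would have integral `0`, but `hnorm` gives a positive value.
        by_contra hcon
        have h0 : ∫ w in Ioi (0 : ℝ), ‖k w u‖ = 0 := by
          refine integral_undef fun h => hcon ?_
          refine (integrable_norm_iff ?_).1 h
          refine Measurable.aestronglyMeasurable ?_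
          simp only [hk]
          fun_prop
        rw [hnorm u hu] at h0
        have hG := Real.Gamma_pos_of_pos hs0
        have hn : 0 < ‖(u : ℂ) ^ (s - 3 / 2) *
          ((Real.exp (-(x ^ 2 * u) - c ^ 2 / u) : ℝ) : ℂ)‖ := by
          rw [norm_mul, Complex.norm_cpow_eq_rpow_re_of_pos hu, Complex.norm_real,
            Real.norm_of_nonneg (Real.exp_pos _).le]
          positivity
        have : 0 < (c ^ 2) ^ (-s.re) := by positivity
        exact (mul_pos (mul_pos this hG) hn).ne' h0
      · refine Integrable.congr (((integrableOn_cpow_exp (c := c) hx hs).norm).const_mul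
          ((c ^ 2) ^ (-s.re) * Real.Gamma s.re)) ?_
        refine (ae_restrict_iff' measurableSet_Ioi).2 (ae_of_all _ fun u hu => ?_)
        exact (hnorm u hu).symm
    · refine Measurable.aestronglyMeasurable ?_
      simp only [hk, Function.uncurry_def]
      fun_prop
  have hsub : ∀ w ∈ Ioi (0 : ℝ), (w : ℂ) ^ (s - 1) *
        ((Real.exp (-((2 * c * x) * √(1 + w))) / (2 * √(1 + w)) : ℝ) : ℂ) =
      (c : ℂ) / (2 * √Real.pi) * ∫ u in Ioi (0 : ℝ), k w u := by
    intro w hw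
    have hw : 0 < w := hw
    have hr : 0 < √(1 + w) := Real.sqrt_pos.2 (by linarith)
    have h := subordination hx (mul_pos hc hr)
    rw [mul_pow, Real.sq_sqrt (by linarith)] at h
    simp only [hk]
    rw [integral_const_mul, integral_complex_ofReal, h]
    have : 2 * x * (c * √(1 + w)) = 2 * c * x * √(1 + w) := by ring
    rw [this]
    have hr' : ((√(1 + w) : ℝ) : ℂ) ≠ 0 := by exact_mod_cast hr.ne'
    have hpi' : ((√Real.pi : ℝ) : ℂ) ≠ 0 := by exact_mod_cast hpi.ne'
    have hc' : (c : ℂ) ≠ 0 := by exact_mod_cast hc.ne'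
    push_cast
    field_simp
  rw [bessel_cov, setIntegral_congr_fun measurableSet_Ioi hsub, integral_const_mul,
    integral_integral_swap hint, setIntegral_congr_fun measurableSet_Ioi hinner,
    integral_const_mul]
  ring

/-! ### The theta function and the Mellin transform -/

/-- Jacobi's identity `θ(t) = √(π/t) θ(π²/t)` for `θ(t) = ∑_{n ∈ ℤ} e^{-n² t}`, written for the
sums over positive `n`. -/
theorem theta_split {t : ℝ} (ht : 0 < t) : ∃ A B : ℂ,
    HasSum (fun n : ℕ => ((Real.exp (-((n + 1 : ℝ) ^ 2 * t)) : ℝ) : ℂ)) A ∧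
    HasSum (fun n : ℕ => ((Real.exp (-((Real.pi * (n + 1)) ^ 2 / t)) : ℝ) : ℂ)) B ∧
    A = -1 / 2 + ((√Real.pi / √t : ℝ) : ℂ) * (1 / 2 + B) := by
  have hpi := Real.pi_pos
  have hpi' : (Real.pi : ℂ) ≠ 0 := by exact_mod_cast hpi.ne'
  have ht' : (t : ℂ) ≠ 0 := by exact_mod_cast ht.ne'
  have hI : ∀ r : ℝ, (Real.pi : ℂ) * Complex.I * ((r : ℂ) * Complex.I) = -(Real.pi * r) := by
    intro r
    linear_combination (Real.pi : ℂ) * r * Complex.I_sq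
  have hsum : ∀ r : ℝ, 0 < r →
      HasSum (fun n : ℕ => ((Real.exp (-((n + 1 : ℝ) ^ 2 * (Real.pi * r))) : ℝ) : ℂ))
        ((jacobiTheta ((r : ℂ) * Complex.I) - 1) / 2) := by
    intro r hr
    refine (hasSum_nat_jacobiTheta (τ := (r : ℂ) * Complex.I) (by simpa using hr)).congr_fun
      fun n => ?_
    push_cast
    congr 1
    linear_combination -((n : ℂ) + 1) ^ 2 * hI r
  refine ⟨(jacobiTheta (((t / Real.pi : ℝ) : ℂ) * Complex.I) - 1) / 2,
    (jacobiTheta (((Real.pi / t : ℝ) : ℂ) * Complex.I) - 1) / 2, ?_, ?_, ?_⟩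
  · convert hsum (t / Real.pi) (by positivity) using 6
    field_simp
  · convert hsum (Real.pi / t) (by positivity) using 5
    field_simp
  · have h := Complex.tsum_exp_neg_mul_int_sq (a := ((t / Real.pi : ℝ) : ℂ))
      (by rw [Complex.ofReal_re]; positivity)
    have e1 : jacobiTheta (((t / Real.pi : ℝ) : ℂ) * Complex.I) =
        ∑' n : ℤ, Complex.exp (-Real.pi * ((t / Real.pi : ℝ) : ℂ) * (n : ℂ) ^ 2) := by
      refine tsum_congr fun n => ?_
      congr 1
      linear_combination (n : ℂ) ^ 2 * hI (t / Real.pi)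
    have e2 : jacobiTheta (((Real.pi / t : ℝ) : ℂ) * Complex.I) =
        ∑' n : ℤ, Complex.exp (-Real.pi / ((t / Real.pi : ℝ) : ℂ) * (n : ℂ) ^ 2) := by
      refine tsum_congr fun n => ?_
      congr 1
      have : -(Real.pi : ℂ) / ((t / Real.pi : ℝ) : ℂ) = -(Real.pi * ((Real.pi / t : ℝ) : ℂ)) := by
        push_cast
        field_simp
      rw [this]
      linear_combination (n : ℂ) ^ 2 * hI (Real.pi / t)
    have e3 : 1 / ((t / Real.pi : ℝ) : ℂ) ^ (1 / 2 : ℂ) = ((√Real.pi / √t : ℝ) : ℂ) := by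
      have : ((t / Real.pi : ℝ) : ℂ) ^ (1 / 2 : ℂ) = ((√(t / Real.pi) : ℝ) : ℂ) := by
        rw [Real.sqrt_eq_rpow, Complex.ofReal_cpow (by positivity)]
        push_cast
        rfl
      rw [this, Real.sqrt_div ht.le]
      push_cast
      rw [one_div_div]
    rw [e1, h, ← e2, e3]
    ring

/-- Decay in `c` of the dual integrals, from `e^{-c²/u} ≤ u / c²`; it is what makes the series
over `c = π (n + 1)` absolutely convergent. -/
theorem integral_norm_le {x c : ℝ} (hx : 0 < x) (hc : 0 < c) {s : ℂ} (hs : 1 / 2 < s.re) :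
    ∫ u in Ioi (0 : ℝ), ‖(u : ℂ) ^ (s - 3 / 2) *
      ((Real.exp (-(x ^ 2 * u) - c ^ 2 / u) : ℝ) : ℂ)‖ ≤
      (c ^ 2)⁻¹ * ∫ u in Ioi (0 : ℝ), u ^ (s.re - 1 / 2) * Real.exp (-(x ^ 2 * u)) := by
  rw [← integral_const_mul]
  refine setIntegral_mono_on (integrableOn_cpow_exp hx hs).norm
    ((integrableOn_rpow_exp hx (by linarith)).const_mul _) measurableSet_Ioi fun u hu => ?_
  have hu : 0 < u := hu
  have hre : (s - 3 / 2).re = s.re - 3 / 2 := by norm_num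
  rw [norm_mul, Complex.norm_cpow_eq_rpow_re_of_pos hu, Complex.norm_real,
    Real.norm_of_nonneg (Real.exp_pos _).le, hre, sub_eq_add_neg (-(x ^ 2 * u)), Real.exp_add,
    show s.re - 1 / 2 = (s.re - 3 / 2) + 1 by ring, Real.rpow_add_one hu.ne']
  have hy : 0 < c ^ 2 / u := by positivity
  have h : Real.exp (-(c ^ 2 / u)) ≤ (c ^ 2)⁻¹ * u := by
    have h1 := Real.add_one_le_exp (c ^ 2 / u)
    rw [Real.exp_neg, show (c ^ 2)⁻¹ * u = (c ^ 2 / u)⁻¹ by field_simp]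
    gcongr
    linarith
  calc u ^ (s.re - 3 / 2) * (Real.exp (-(x ^ 2 * u)) * Real.exp (-(c ^ 2 / u)))
      ≤ u ^ (s.re - 3 / 2) * (Real.exp (-(x ^ 2 * u)) * ((c ^ 2)⁻¹ * u)) := by gcongr
    _ = _ := by ring

/-- The `n`-th term of the Bessel series is, up to `Γ(s)`, the Mellin integral of the `n`-th dual
theta term. -/
theorem bessel_term {x : ℝ} (hx : 0 < x) {s : ℂ} (hs : 1 / 2 < s.re) (n : ℕ) :
    2 * (Real.pi : ℂ) ^ s * (x : ℂ) ^ ((1 : ℂ) / 2 - s) *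
      (((n + 1 : ℝ) : ℂ) ^ (s - 1 / 2) * besselK (s - 1 / 2) (2 * Real.pi * (n + 1) * x)) =
    √Real.pi * ∫ u in Ioi (0 : ℝ), (u : ℂ) ^ (s - 3 / 2) *
      ((Real.exp (-(x ^ 2 * u) - (Real.pi * (n + 1)) ^ 2 / u) : ℝ) : ℂ) := by
  have hpi := Real.pi_pos
  have hN : (0 : ℝ) < n + 1 := by positivity
  have hG : Complex.Gamma s ≠ 0 := Complex.Gamma_ne_zero_of_re_pos (by linarith)
  have hk := bessel_kernel hx (mul_pos hpi hN) hs
  rw [besselK, show s - 1 / 2 - 1 / 2 = s - 1 by ring, show s - 1 / 2 + 1 / 2 = s by ring,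
    show 2 * Real.pi * ((n : ℝ) + 1) * x = 2 * (Real.pi * (n + 1)) * x by ring, hk]
  generalize ∫ u in Ioi (0 : ℝ), (u : ℂ) ^ (s - 3 / 2) *
      ((Real.exp (-(x ^ 2 * u) - (Real.pi * (n + 1)) ^ 2 / u) : ℝ) : ℂ) = J
  rw [show 2 * (Real.pi * ((n : ℝ) + 1)) * x / 2 = Real.pi * (n + 1) * x by ring]
  generalize (n : ℝ) + 1 = N at *
  have hp0 : (Real.pi : ℂ) ≠ 0 := by exact_mod_cast hpi.ne'
  have hx0 : (x : ℂ) ≠ 0 := by exact_mod_cast hx.ne'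
  have hN0 : (N : ℂ) ≠ 0 := by exact_mod_cast hN.ne'
  have hq : ((√Real.pi : ℝ) : ℂ) ≠ 0 := by exact_mod_cast (Real.sqrt_pos.2 hpi).ne'
  have hpow : (Real.pi : ℂ) ^ s * (x : ℂ) ^ ((1 : ℂ) / 2 - s) * (N : ℂ) ^ (s - 1 / 2) *
      ((Real.pi * N * x : ℝ) : ℂ) ^ (s - 1 / 2) *
      (((Real.pi * N : ℝ) : ℂ) * ((Real.pi * N : ℝ) : ℂ) ^ (-(2 * s))) = √Real.pi := by
    have hq2 : ((√Real.pi : ℝ) : ℂ) = Complex.exp (Real.log Real.pi * (1 / 2)) := by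
      rw [Real.sqrt_eq_rpow, Real.rpow_def_of_pos hpi]
      push_cast
      rfl
    have h1 : ((Real.pi * N : ℝ) : ℂ) = Complex.exp (Real.log Real.pi + Real.log N) := by
      rw [← Complex.ofReal_add, ← Real.log_mul hpi.ne' hN.ne', ← Complex.ofReal_exp,
        Real.exp_log (by positivity)]
    rw [Complex.ofReal_mul (Real.pi * N) x,
      Complex.mul_cpow_ofReal_nonneg (by positivity) hx.le, Complex.ofReal_mul Real.pi N,
      Complex.mul_cpow_ofReal_nonneg hpi.le hN.le, Complex.mul_cpow_ofReal_nonneg hpi.le hN.le,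
      ← Complex.ofReal_mul Real.pi N, h1, hq2]
    simp only [Complex.cpow_def_of_ne_zero hp0, Complex.cpow_def_of_ne_zero hx0,
      Complex.cpow_def_of_ne_zero hN0, ← Complex.ofReal_log hpi.le, ← Complex.ofReal_log hx.le,
      ← Complex.ofReal_log hN.le, ← Complex.exp_add]
    congr 1
    ring
  rw [← hpow]
  field_simp

theorem sum_eq_mellin {x : ℝ} (hx : 0 < x) {s : ℂ} (hs : 1 / 2 < s.re) {F : ℝ → ℂ}
    (hF : ∀ t ∈ Ioi (0 : ℝ), HasSum (fun n : ℕ =>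
      ((Real.exp (-(((n + 1 : ℝ) ^ 2 + x ^ 2) * t)) : ℝ) : ℂ)) (F t)) :
    Complex.Gamma s * ∑' n : ℕ, (((n + 1 : ℝ) ^ 2 + x ^ 2 : ℝ) : ℂ) ^ (-s) = mellin F s := by
  have h := hasSum_mellin (a := fun _ : ℕ => (1 : ℂ)) (p := fun n : ℕ => (n + 1 : ℝ) ^ 2 + x ^ 2)
    (F := F) (s := s) (fun n => Or.inr (by positivity)) (by linarith) ?_ ?_
  · rw [← h.tsum_eq, ← tsum_mul_left]
    refine tsum_congr fun n => ?_
    rw [Complex.cpow_neg, mul_one, div_eq_mul_inv]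
  · intro t ht
    simpa only [one_mul, neg_mul] using hF t ht
  · have hs' : Summable fun n : ℕ => 1 / ((n + 1 : ℕ) : ℝ) ^ (2 * s.re) :=
      (summable_nat_add_iff 1).2 (Real.summable_one_div_nat_rpow.2 (by linarith))
    refine Summable.of_nonneg_of_le (fun n => by positivity) (fun n => ?_) hs'
    rw [norm_one, Real.rpow_mul (by positivity)]
    push_cast
    rw [Real.rpow_two]
    gcongr
    nlinarith

theorem integral_elementary {x : ℝ} (hx : 0 < x) {a : ℂ} (ha : 0 < a.re) :
    ∫ t in Ioi (0 : ℝ), (t : ℂ) ^ (a - 1) * ((Real.exp (-(x ^ 2 * t)) : ℝ) : ℂ) =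
      (x : ℂ) ^ (-(2 * a)) * Complex.Gamma a := by
  have h := Complex.integral_cpow_mul_exp_neg_mul_Ioi ha (pow_pos hx 2)
  have hx0 : (x : ℂ) ≠ 0 := by exact_mod_cast hx.ne'
  have e : (1 / ((x ^ 2 : ℝ) : ℂ)) ^ a = (x : ℂ) ^ (-(2 * a)) := by
    rw [← Complex.ofReal_one, ← Complex.ofReal_div, Complex.cpow_def_of_ne_zero
        (by exact_mod_cast (by positivity : 1 / x ^ 2 ≠ 0)),
      Complex.cpow_def_of_ne_zero hx0, ← Complex.ofReal_log (by positivity),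
      ← Complex.ofReal_log hx.le, one_div, Real.log_inv, Real.log_pow]
    congr 1
    push_cast
    ring
  rw [← e, ← h]
  refine setIntegral_congr_fun measurableSet_Ioi fun t _ => ?_
  push_cast
  rfl

theorem integrableOn_elementary {x : ℝ} (hx : 0 < x) {a : ℂ} (ha : 0 < a.re) :
    IntegrableOn (fun t : ℝ => (t : ℂ) ^ (a - 1) * ((Real.exp (-(x ^ 2 * t)) : ℝ) : ℂ))
      (Ioi 0) := by
  have h := integrableOn_cpow_exp (c := 0) hx (s := a + 1 / 2) (by simpa using ha)
  rw [show a + 1 / 2 - 3 / 2 = a - 1 by ring] at h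
  simpa using h

/-- Jacobi's identity multiplied by `t ^ (s-1) e^{-x² t}`; the factor `t ^ (-(s-1))` on the right
undoes the Mellin weight. -/
theorem dual_expansion {t : ℝ} (ht : 0 < t) (x : ℝ) (s : ℂ) : ∃ E : ℂ,
    HasSum (fun n : ℕ => √Real.pi * ((t : ℂ) ^ (s - 3 / 2) *
      ((Real.exp (-(x ^ 2 * t) - (Real.pi * (n + 1)) ^ 2 / t) : ℝ) : ℂ))) E ∧
    HasSum (fun n : ℕ => ((Real.exp (-(((n + 1 : ℝ) ^ 2 + x ^ 2) * t)) : ℝ) : ℂ))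
      ((t : ℂ) ^ (-(s - 1)) *
        ((-1 / 2 * ((t : ℂ) ^ (s - 1) * ((Real.exp (-(x ^ 2 * t)) : ℝ) : ℂ)) +
          √Real.pi / 2 * ((t : ℂ) ^ (s - 1 / 2 - 1) *
            ((Real.exp (-(x ^ 2 * t)) : ℝ) : ℂ))) + E)) := by
  have ht0 : (t : ℂ) ≠ 0 := by exact_mod_cast ht.ne'
  obtain ⟨A, B, hA, hB, hAB⟩ := theta_split ht
  have hsq : (t : ℂ) ^ (s - 3 / 2) = (t : ℂ) ^ (s - 1) * ((√t : ℝ) : ℂ)⁻¹ := by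
    have : ((√t : ℝ) : ℂ) = (t : ℂ) ^ (1 / 2 : ℂ) := by
      rw [Real.sqrt_eq_rpow, Complex.ofReal_cpow ht.le]
      push_cast
      rfl
    rw [this, ← Complex.cpow_neg, ← Complex.cpow_add _ _ ht0]
    congr 1
    ring
  refine ⟨√Real.pi * ((t : ℂ) ^ (s - 3 / 2) * ((Real.exp (-(x ^ 2 * t)) : ℝ) : ℂ)) * B, ?_, ?_⟩
  · refine (hB.mul_left _).congr_fun fun n => ?_
    rw [sub_eq_add_neg (-(x ^ 2 * t)), Real.exp_add, Complex.ofReal_mul]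
    ring
  · have hp : (t : ℂ) ^ (s - 1) ≠ 0 := by simp [Complex.cpow_eq_zero_iff, ht0]
    have hr : ((√t : ℝ) : ℂ) ≠ 0 := by exact_mod_cast (Real.sqrt_pos.2 ht).ne'
    have hval : (t : ℂ) ^ (-(s - 1)) *
        ((-1 / 2 * ((t : ℂ) ^ (s - 1) * ((Real.exp (-(x ^ 2 * t)) : ℝ) : ℂ)) +
          √Real.pi / 2 * ((t : ℂ) ^ (s - 1 / 2 - 1) * ((Real.exp (-(x ^ 2 * t)) : ℝ) : ℂ))) +
          √Real.pi * ((t : ℂ) ^ (s - 3 / 2) * ((Real.exp (-(x ^ 2 * t)) : ℝ) : ℂ)) * B) =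
        ((Real.exp (-(x ^ 2 * t)) : ℝ) : ℂ) * A := by
      rw [hAB, Complex.cpow_neg, show s - 1 / 2 - 1 = s - 3 / 2 by ring, hsq, Complex.ofReal_div]
      generalize ((Real.exp (-(x ^ 2 * t)) : ℝ) : ℂ) = e
      field_simp
      ring
    rw [hval]
    refine (hA.mul_left _).congr_fun fun n => ?_
    rw [add_mul, neg_add, Real.exp_add, Complex.ofReal_mul, mul_comm]

theorem watson_formula (x : ℝ) (hx : 0 < x) (s : ℂ) (hs : 1 / 2 < s.re) :
    (∑' n : ℕ, (((n + 1 : ℝ) ^ 2 + x ^ 2 : ℝ) : ℂ) ^ (-s)) =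
      (Real.sqrt Real.pi : ℂ) * (x : ℂ) ^ (1 - 2 * s) / (2 * Complex.Gamma s) *
          Complex.Gamma (s - 1 / 2)
      - (x : ℂ) ^ (-(2 * s)) / 2
      + 2 * (Real.pi : ℂ) ^ s * (x : ℂ) ^ ((1 : ℂ) / 2 - s) / Complex.Gamma s *
          ∑' n : ℕ, ((n + 1 : ℝ) : ℂ) ^ (s - 1 / 2) *
            besselK (s - 1 / 2) (2 * Real.pi * (n + 1) * x) := by
  have hpi := Real.pi_pos
  have hG : Complex.Gamma s ≠ 0 := Complex.Gamma_ne_zero_of_re_pos (by linarith)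
  have hs1 : 0 < s.re := by linarith
  have hs2 : 0 < (s - 1 / 2).re := by
    have : (s - 1 / 2).re = s.re - 1 / 2 := by norm_num
    linarith
  -- `g n` is the dual theta term of index `n + 1`, `h₀` the part giving the Gamma factors. Placing
  -- `h₀` in front of the sequence `g` lets one exchange of sum and integral treat everything.
  set g : ℕ → ℝ → ℂ := fun n t => √Real.pi * ((t : ℂ) ^ (s - 3 / 2) *
    ((Real.exp (-(x ^ 2 * t) - (Real.pi * (n + 1)) ^ 2 / t) : ℝ) : ℂ)) with hg
  set h₀ : ℝ → ℂ := fun t =>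
    -1 / 2 * ((t : ℂ) ^ (s - 1) * ((Real.exp (-(x ^ 2 * t)) : ℝ) : ℂ)) +
    √Real.pi / 2 * ((t : ℂ) ^ (s - 1 / 2 - 1) * ((Real.exp (-(x ^ 2 * t)) : ℝ) : ℂ)) with hh₀
  set h : ℕ → ℝ → ℂ := fun n => Nat.casesOn n h₀ g with hh
  have hI1 := (integrableOn_elementary hx hs1).const_mul (-1 / 2 : ℂ)
  have hI2 := (integrableOn_elementary hx hs2).const_mul (√Real.pi / 2 : ℂ)
  have hint0 : IntegrableOn h₀ (Ioi 0) := hI1.add hI2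
  have hintg : ∀ n, IntegrableOn (g n) (Ioi 0) := fun n =>
    (integrableOn_cpow_exp hx hs).const_mul _
  have hinth : ∀ n, IntegrableOn (h n) (Ioi 0) := by
    intro n
    cases n with
    | zero => exact hint0
    | succ n => exact hintg n
  have hsumm : Summable fun n => ∫ t in Ioi (0 : ℝ), ‖h n t‖ := by
    rw [← summable_nat_add_iff 1]
    have hs' : Summable fun n : ℕ => 1 / ((n + 1 : ℕ) : ℝ) ^ 2 :=
      (summable_nat_add_iff 1).2 (Real.summable_one_div_nat_pow.2 one_lt_two)
    refine Summable.of_nonneg_of_le (fun n => integral_nonneg fun t => norm_nonneg _)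
      (fun n => ?_) (hs'.mul_left (√Real.pi * ((Real.pi ^ 2)⁻¹ *
        ∫ u in Ioi (0 : ℝ), u ^ (s.re - 1 / 2) * Real.exp (-(x ^ 2 * u)))))
    change ∫ t in Ioi (0 : ℝ), ‖g n t‖ ≤ _
    have hle := integral_norm_le hx (c := Real.pi * (n + 1)) (by positivity) hs
    simp only [hg]
    simp_rw [norm_mul (((√Real.pi : ℝ) : ℂ)), Complex.norm_real,
      Real.norm_of_nonneg (Real.sqrt_nonneg Real.pi)]
    rw [integral_const_mul]
    refine (mul_le_mul_of_nonneg_left hle (Real.sqrt_nonneg _)).trans_eq ?_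
    push_cast
    field_simp
  have hswap := hasSum_integral_of_summable_integral_norm hinth hsumm
  have hF : ∀ t ∈ Ioi (0 : ℝ), HasSum (fun n : ℕ =>
      ((Real.exp (-(((n + 1 : ℝ) ^ 2 + x ^ 2) * t)) : ℝ) : ℂ))
      ((t : ℂ) ^ (-(s - 1)) * ∑' n, h n t) := by
    intro t ht
    have ht : 0 < t := ht
    obtain ⟨E, hE, hsum⟩ := dual_expansion ht x s
    have hhsum : ∑' n, h n t = h₀ t + E := by
      have := (hasSum_nat_add_iff (f := fun n => h n t) 1).1 hE
      rw [this.tsum_eq, Finset.sum_range_one, add_comm]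
      rfl
    rw [hhsum]
    exact hsum
  have hmell := sum_eq_mellin hx hs hF
  have hmell2 : mellin (fun t : ℝ => (t : ℂ) ^ (-(s - 1)) * ∑' n, h n t) s =
      ∫ t in Ioi (0 : ℝ), ∑' n, h n t := by
    refine setIntegral_congr_fun measurableSet_Ioi fun t ht => ?_
    have ht0 : (t : ℂ) ≠ 0 := by exact_mod_cast (ne_of_gt ht)
    have hp : (t : ℂ) ^ (s - 1) ≠ 0 := by simp [Complex.cpow_eq_zero_iff, ht0]
    simp only [smul_eq_mul]
    rw [Complex.cpow_neg, mul_inv_cancel_left₀ hp]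
  have hint_h0 : ∫ t in Ioi (0 : ℝ), h 0 t =
      -1 / 2 * ((x : ℂ) ^ (-(2 * s)) * Complex.Gamma s) +
      √Real.pi / 2 * ((x : ℂ) ^ (1 - 2 * s) * Complex.Gamma (s - 1 / 2)) := by
    change ∫ t in Ioi (0 : ℝ), h₀ t = _
    rw [hh₀, integral_add hI1 hI2, integral_const_mul, integral_const_mul,
      integral_elementary hx hs1, integral_elementary hx hs2,
      show -(2 * (s - 1 / 2)) = 1 - 2 * s by ring]
  have htail : ∑' n : ℕ, ∫ t in Ioi (0 : ℝ), h (n + 1) t =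
      2 * (Real.pi : ℂ) ^ s * (x : ℂ) ^ ((1 : ℂ) / 2 - s) *
          ∑' n : ℕ, ((n + 1 : ℝ) : ℂ) ^ (s - 1 / 2) *
            besselK (s - 1 / 2) (2 * Real.pi * (n + 1) * x) := by
    rw [← tsum_mul_left]
    refine tsum_congr fun n => ?_
    rw [bessel_term hx hs n, ← integral_const_mul]
  rw [hmell2, ← hswap.tsum_eq, hswap.summable.tsum_eq_zero_add, hint_h0, htail] at hmell
  refine mul_left_cancel₀ hG ?_
  rw [hmell]
  generalize (∑' n : ℕ, ((n + 1 : ℝ) : ℂ) ^ (s - 1 / 2) *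
    besselK (s - 1 / 2) (2 * Real.pi * (n + 1) * x)) = S
  field_simp
  ring
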